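/- Let n ≥ 8 be divisible by 4, let H be a saturated orthogonal array OA(n,n−1,2,2), and let H' be the n×(n−2) design obtained from H by deleting one fixed column. Let X be the n × ((n−2)(n−3)/2) two-level design whose columns are exactly the interaction columns of all (n−2 choose 2) unordered pairs of distinct columns of H'. Then E(s²)(X) = n²(n−5)/((n−1)(n−3)), and X is E(s²)-optimal: E(s²)(X) ≤ E(s²)(Y) for every n × ((n−2)(n−3)/2) balanced two-level design Y. -/

import Mathlib

open Finset

/-- The `E(s²)` value of an `n × m` two-level design `X` (columns indexed by `ι`,
`m = card ι`): the average of the squared off-diagonal entries of `XᵀX`. -/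
noncomputable def Es2 {n : ℕ} {ι : Type} [Fintype ι] [DecidableEq ι]
    (X : Fin n → ι → ℚ) : ℚ :=
  (∑ i : ι, ∑ j : ι, if i ≠ j then (∑ r : Fin n, X r i * X r j) ^ 2 else 0) /
    ((Fintype.card ι : ℚ) * ((Fintype.card ι : ℚ) - 1))

/-!
In a balanced `n × m` two-level design `Z` the entries of `ZZᵀ` add up to `0`. Together with
`tr (ZᵀZ)² = tr (ZZᵀ)²` this turns `E(s²)` into `∑ (⟨Z_r, Z_s⟩ + c)²` over pairs of rows, up to a
positive factor and terms that depend only on `n`, `m` and the free constant `c`. The inner products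
of rows of two-level designs with `m` columns all have the parity of `m`, so a design in which those
of distinct rows lie within distance `1` of a common value `-c` is optimal. Bordering a saturated
orthogonal array by a column of ones gives a Hadamard matrix, so distinct rows of the array have
inner product `-1`; after deleting column `k`, the interaction columns give the inner product
`±1 - (n / 2 - 2)`, where the sign is the product of the two entries in column `k`.
-/

section Sums

variable {R ι ρ : Type*} [Fintype ι] [Fintype ρ]

theorem sum_sum_sq_eq_trace_mul_transpose [Semiring R] (A : Matrix ρ ι R) :
    ∑ r, ∑ i, A r i ^ 2 = (A * A.transpose).trace := by
  simp [Matrix.trace, Matrix.mul_apply, sq]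

theorem sum_sq_dotProduct_cols_eq_rows [CommSemiring R] (Z : ρ → ι → R) :
    ∑ i, ∑ j, (∑ r, Z r i * Z r j) ^ 2 = ∑ r, ∑ s, (Z r ⬝ᵥ Z s) ^ 2 := by
  let A : Matrix ρ ι R := Matrix.of Z
  calc ∑ i, ∑ j, (∑ r, Z r i * Z r j) ^ 2
      = ((A.transpose * A) * (A.transpose * A).transpose).trace :=
        sum_sum_sq_eq_trace_mul_transpose (A.transpose * A)
    _ = ((A * A.transpose) * (A * A.transpose).transpose).trace := by
        simp only [Matrix.transpose_mul, Matrix.transpose_transpose]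
        rw [Matrix.mul_assoc, Matrix.trace_mul_comm, ← Matrix.mul_assoc, ← Matrix.mul_assoc]
    _ = ∑ r, ∑ s, (Z r ⬝ᵥ Z s) ^ 2 :=
        (sum_sum_sq_eq_trace_mul_transpose (A * A.transpose)).symm

theorem sq_sum_eq_sum_sq_add_two_mul_sum_lt [LinearOrder ι] [CommSemiring R] (f : ι → R) :
    (∑ a, f a) ^ 2 = ∑ a, f a ^ 2 + 2 * ∑ p : {p : ι × ι // p.1 < p.2}, f p.1.1 * f p.1.2 := by
  have sum_lt : ∑ p : {p : ι × ι // p.1 < p.2}, f p.1.1 * f p.1.2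
      = ∑ a, ∑ b, if a < b then f a * f b else 0 := by
    rw [← Fintype.sum_prod_type', ← sum_filter]
    exact (sum_subtype _ (by simp) fun p : ι × ι ↦ f p.1 * f p.2).symm
  have sum_gt : ∑ a, ∑ b, (if b < a then f a * f b else 0)
      = ∑ a, ∑ b, if a < b then f a * f b else 0 := by
    rw [sum_comm]
    simp only [mul_comm]
  have trichotomy (a b : ι) : f a * f b = (if a = b then f a * f b else 0)
      + ((if a < b then f a * f b else 0) + if b < a then f a * f b else 0) := by
    rcases lt_trichotomy a b with h | rfl | h
    · simp [h, h.ne, h.not_gt]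
    · simp
    · simp [h, h.ne', h.not_gt]
  calc (∑ a, f a) ^ 2 = ∑ a, ∑ b, f a * f b := by rw [sq, sum_mul_sum]
    _ = ∑ a, f a ^ 2 + (∑ a, ∑ b, (if a < b then f a * f b else 0)
          + ∑ a, ∑ b, if b < a then f a * f b else 0) := by
        rw [sum_congr rfl fun a _ ↦ sum_congr rfl fun b _ ↦ trichotomy a b]
        simp only [sum_add_distrib, sum_ite_eq, mem_univ, if_true, sq]
    _ = _ := by rw [sum_gt, sum_lt, two_mul]

theorem card_subtype_lt_eq_choose_two (α : Type*) [Fintype α] [LinearOrder α] :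
    Fintype.card {p : α × α // p.1 < p.2} = (Fintype.card α).choose 2 := by
  have h := sq_sum_eq_sum_sq_add_two_mul_sum_lt fun _ : α ↦ 1
  simp only [sum_const, card_univ, smul_eq_mul, mul_one, sq] at h
  rw [Nat.choose_two_right, Nat.mul_sub_one]
  omega

end Sums

section Signs

theorem mul_eq_one_or_eq_neg_one {R : Type*} [MulOneClass R] [HasDistribNeg R] {a b : R}
    (ha : a = 1 ∨ a = -1) (hb : b = 1 ∨ b = -1) : a * b = 1 ∨ a * b = -1 := by
  rcases ha with rfl | rfl <;> rcases hb with rfl | rfl <;> simp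

theorem exists_sum_eq_card_add_two_mul {R ι : Type*} [Ring R] [Fintype ι] {u : ι → R}
    (hu : ∀ i, u i = 1 ∨ u i = -1) : ∃ k : ℤ, ∑ i, u i = Fintype.card ι + 2 * k := by
  have odd_entry (i : ι) : ∃ k : ℤ, u i = 1 + 2 * k := by
    rcases hu i with h | h
    · exact ⟨0, by simp [h]⟩
    · exact ⟨-1, by rw [h]; norm_num⟩
  choose k hk using odd_entry
  exact ⟨∑ i, k i, by simp [hk, sum_add_distrib, mul_sum]⟩

theorem sq_le_sq_add_two_mul_intCast {K : Type*} [CommRing K] [LinearOrder K]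
    [IsStrictOrderedRing K] {x : K} (hx : |x| ≤ 1) (k : ℤ) : x ^ 2 ≤ (x + 2 * k) ^ 2 := by
  obtain ⟨hx₁, hx₂⟩ := abs_le.1 hx
  rw [sq_le_sq]
  rcases lt_trichotomy k 0 with hk | rfl | hk
  · have : (k : K) ≤ -1 := by exact_mod_cast Int.le_sub_one_of_lt hk
    exact hx.trans (le_abs.2 (.inr (by linarith)))
  · simp
  · have : (1 : K) ≤ k := by exact_mod_cast hk
    exact hx.trans (le_abs.2 (.inl (by linarith)))

end Signs

/-- Balanced two-level designs: matrices with entries `±1` whose columns sum to `0`. The rows are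
the runs, indexed by `ρ`, and the columns are the factors, indexed by `ι`. -/
structure IsBalancedTwoLevel {ρ ι : Type*} [Fintype ρ] (Z : ρ → ι → ℚ) : Prop where
  eq_one_or_eq_neg_one : ∀ r i, Z r i = 1 ∨ Z r i = -1
  sum_col_eq_zero : ∀ i, ∑ r, Z r i = 0

namespace IsBalancedTwoLevel

section RowProducts

variable {ρ ι : Type*} [Fintype ρ] [Fintype ι] {Z : ρ → ι → ℚ}

theorem dotProduct_self (hZ : IsBalancedTwoLevel Z) (r : ρ) : Z r ⬝ᵥ Z r = Fintype.card ι := by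
  simp [dotProduct, mul_self_eq_one_iff.2 (hZ.eq_one_or_eq_neg_one r _)]

theorem sum_dotProduct_eq_zero (hZ : IsBalancedTwoLevel Z) (r : ρ) : ∑ s, Z r ⬝ᵥ Z s = 0 := by
  have sum_rows : ∑ s, Z s = 0 := funext fun i ↦ by simp [hZ.sum_col_eq_zero]
  rw [← dotProduct_sum, sum_rows, dotProduct_zero]

theorem exists_dotProduct_eq_card_add_two_mul (hZ : IsBalancedTwoLevel Z) (r s : ρ) :
    ∃ k : ℤ, Z r ⬝ᵥ Z s = Fintype.card ι + 2 * k :=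
  exists_sum_eq_card_add_two_mul fun i ↦
    mul_eq_one_or_eq_neg_one (hZ.eq_one_or_eq_neg_one r i) (hZ.eq_one_or_eq_neg_one s i)

end RowProducts

variable {n : ℕ} {ι : Type} [Fintype ι] [DecidableEq ι] {Z : Fin n → ι → ℚ}

theorem Es2_eq_sum_sq_dotProduct_add (hZ : IsBalancedTwoLevel Z) (c : ℚ) :
    Es2 Z = (∑ r, ∑ s, (Z r ⬝ᵥ Z s + c) ^ 2 - n ^ 2 * c ^ 2 - n ^ 2 * Fintype.card ι)
      / (Fintype.card ι * (Fintype.card ι - 1)) := by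
  have sum_shift : ∑ r, ∑ s, (Z r ⬝ᵥ Z s + c) ^ 2
      = ∑ r, ∑ s, (Z r ⬝ᵥ Z s) ^ 2 + n ^ 2 * c ^ 2 := by
    simp only [add_sq, sum_add_distrib, ← sum_mul, ← mul_sum, hZ.sum_dotProduct_eq_zero, mul_zero,
      zero_mul, sum_const_zero, sum_const, card_univ, Fintype.card_fin, nsmul_eq_mul]
    ring
  have norm_col (i : ι) : ∑ r, Z r i * Z r i = n := by
    simp [mul_self_eq_one_iff.2 (hZ.eq_one_or_eq_neg_one _ i)]
  simp only [Es2, ← sum_filter, filter_ne, sum_erase_eq_sub (mem_univ _), sum_sub_distrib,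
    sum_sq_dotProduct_cols_eq_rows, sum_shift, norm_col, sum_const, card_univ, nsmul_eq_mul]
  ring

theorem Es2_eq_of_sq_dotProduct_add_eq (hZ : IsBalancedTwoLevel Z) {a c : ℚ}
    (h : Pairwise fun r s ↦ (Z r ⬝ᵥ Z s + c) ^ 2 = a) :
    Es2 Z = (n * ((Fintype.card ι + c) ^ 2 + (n - 1) * a) - n ^ 2 * c ^ 2
      - n ^ 2 * Fintype.card ι) / (Fintype.card ι * (Fintype.card ι - 1)) := by
  have sum_row (r : Fin n) :
      ∑ s, (Z r ⬝ᵥ Z s + c) ^ 2 = (Fintype.card ι + c) ^ 2 + (n - 1) * a := by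
    rw [Fintype.sum_eq_add_sum_subtype_ne _ r, hZ.dotProduct_self,
      sum_congr rfl fun s _ ↦ h s.2.symm]
    simp [Nat.cast_pred r.pos]
  rw [hZ.Es2_eq_sum_sq_dotProduct_add c]
  simp only [sum_row, sum_const, card_univ, Fintype.card_fin, nsmul_eq_mul]

theorem Es2_le_of_abs_dotProduct_add_le_one {κ : Type} [Fintype κ] [DecidableEq κ]
    {Y : Fin n → κ → ℚ} (hZ : IsBalancedTwoLevel Z) (hY : IsBalancedTwoLevel Y)
    (hcard : Fintype.card κ = Fintype.card ι) (c : ℚ)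
    (hc : Pairwise fun r s ↦ |Z r ⬝ᵥ Z s + c| ≤ 1) : Es2 Z ≤ Es2 Y := by
  have sq_le (r s : Fin n) : (Z r ⬝ᵥ Z s + c) ^ 2 ≤ (Y r ⬝ᵥ Y s + c) ^ 2 := by
    rcases eq_or_ne r s with rfl | hrs
    · rw [hZ.dotProduct_self, hY.dotProduct_self, hcard]
    obtain ⟨k, hk⟩ := hZ.exists_dotProduct_eq_card_add_two_mul r s
    obtain ⟨l, hl⟩ := hY.exists_dotProduct_eq_card_add_two_mul r s
    have same_parity : Y r ⬝ᵥ Y s + c = Z r ⬝ᵥ Z s + c + 2 * (l - k : ℤ) := by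
      rw [hk, hl, hcard]
      push_cast
      ring
    exact same_parity ▸ sq_le_sq_add_two_mul_intCast (hc hrs) _
  have card_mul_nonneg : (0 : ℚ) ≤ Fintype.card ι * (Fintype.card ι - 1) := by
    have := Nat.cast_choose_two ℚ (Fintype.card ι)
    have : (0 : ℚ) ≤ (Fintype.card ι).choose 2 := Nat.cast_nonneg _
    linarith
  rw [hZ.Es2_eq_sum_sq_dotProduct_add c, hY.Es2_eq_sum_sq_dotProduct_add c, hcard]
  gcongr (∑ r, ∑ s, ?_ - _ - _) / _ with r _ s _
  exact sq_le r s

end IsBalancedTwoLevel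

theorem mul_transpose_eq_smul_one {K ρ κ : Type*} [Field K] [Fintype ρ] [Fintype κ]
    [DecidableEq ρ] [DecidableEq κ] {A : Matrix ρ κ K} {a : K} (ha : a ≠ 0)
    (hcard : Fintype.card ρ = Fintype.card κ) (h : A.transpose * A = a • 1) :
    A * A.transpose = a • 1 := by
  have left_inv : (a⁻¹ • A.transpose) * A = 1 := by
    rw [Matrix.smul_mul, h, inv_smul_smul₀ ha]
  have right_inv := (Matrix.mul_eq_one_comm_of_card_eq ρ κ K hcard).2 left_inv
  rwa [Matrix.mul_smul, inv_smul_eq_iff₀ ha] at right_inv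

/-- Saturated orthogonal arrays of strength two: balanced two-level designs with pairwise
orthogonal columns and one column less than there are rows. -/
structure IsSaturatedOA {ρ κ : Type*} [Fintype ρ] [Fintype κ] (H : ρ → κ → ℚ) : Prop
    extends IsBalancedTwoLevel H where
  sum_mul_eq_zero : Pairwise fun j k ↦ ∑ r, H r j * H r k = 0
  card_add_one : Fintype.card κ + 1 = Fintype.card ρ

theorem IsSaturatedOA.dotProduct_eq_neg_one {ρ κ : Type*} [Fintype ρ] [Fintype κ]
    {H : ρ → κ → ℚ} (hH : IsSaturatedOA H) {r s : ρ} (hrs : r ≠ s) : H r ⬝ᵥ H s = -1 := by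
  classical
  let A : Matrix ρ (Option κ) ℚ := Matrix.of fun r o ↦ o.elim 1 (H r)
  have cols_orthogonal : A.transpose * A = (Fintype.card ρ : ℚ) • 1 := by
    ext j k
    rcases j with _ | j <;> rcases k with _ | k
    · simp [A, Matrix.mul_apply]
    · simp [A, Matrix.mul_apply, hH.sum_col_eq_zero]
    · simp [A, Matrix.mul_apply, hH.sum_col_eq_zero]
    · rcases eq_or_ne j k with rfl | hjk
      · simp [A, Matrix.mul_apply, mul_self_eq_one_iff.2 (hH.eq_one_or_eq_neg_one _ j)]
      · simp [A, Matrix.mul_apply, hH.sum_mul_eq_zero hjk, hjk]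
  have card_ne_zero : (Fintype.card ρ : ℚ) ≠ 0 := by
    exact_mod_cast (Fintype.card_pos_iff.2 ⟨r⟩).ne'
  have rows_orthogonal := mul_transpose_eq_smul_one card_ne_zero
    (by simp [hH.card_add_one]) cols_orthogonal
  have : 1 + H r ⬝ᵥ H s = 0 := by
    simpa [A, Matrix.mul_apply, dotProduct, hrs] using congrFun₂ rows_orthogonal r s
  linarith

section Interactions

variable {ρ α : Type*} [LinearOrder α]

/-- The design whose columns are the interaction columns of `D`, one for each unordered pair of
distinct columns; such a pair is encoded as an increasing pair of column indices. -/
def interactionDesign (D : ρ → α → ℚ) : ρ → {p : α × α // p.1 < p.2} → ℚ :=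
  fun r p ↦ D r p.1.1 * D r p.1.2

variable {D : ρ → α → ℚ}

theorem isBalancedTwoLevel_interactionDesign [Fintype ρ] (hpm : ∀ r j, D r j = 1 ∨ D r j = -1)
    (horth : Pairwise fun j k ↦ ∑ r, D r j * D r k = 0) :
    IsBalancedTwoLevel (interactionDesign D) where
  eq_one_or_eq_neg_one r _ := mul_eq_one_or_eq_neg_one (hpm r _) (hpm r _)
  sum_col_eq_zero p := horth p.2.ne

theorem sq_dotProduct_eq_card_add_two_mul_interactionDesign [Fintype α]
    (hpm : ∀ r j, D r j = 1 ∨ D r j = -1) (r s : ρ) :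
    (D r ⬝ᵥ D s) ^ 2
      = Fintype.card α + 2 * (interactionDesign D r ⬝ᵥ interactionDesign D s) := by
  have sq_entry (j : α) : (D r j * D s j) ^ 2 = 1 :=
    sq_eq_one_iff.2 (mul_eq_one_or_eq_neg_one (hpm r j) (hpm s j))
  simp only [dotProduct, sq_sum_eq_sum_sq_add_two_mul_sum_lt, sq_entry, interactionDesign,
    mul_mul_mul_comm]
  simp

end Interactions

/-- The design obtained from `H` by deleting column `k`. -/
def deleteColumn {ρ κ : Type*} (H : ρ → κ → ℚ) (k : κ) : ρ → {j : κ // j ≠ k} → ℚ :=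
  fun r j ↦ H r j

namespace IsSaturatedOA

variable {ρ κ : Type*} [Fintype ρ] [Fintype κ]

theorem card_subtype_ne_add_two [DecidableEq κ] {H : ρ → κ → ℚ} (hH : IsSaturatedOA H) (k : κ) :
    Fintype.card {j // j ≠ k} + 2 = Fintype.card ρ := by
  have : 0 < Fintype.card κ := Fintype.card_pos_iff.2 ⟨k⟩
  rw [← hH.card_add_one, Fintype.card_subtype_compl, Fintype.card_subtype_eq]
  omega

variable [LinearOrder κ]

theorem isBalancedTwoLevel_interactionDesign_deleteColumn {H : ρ → κ → ℚ}
    (hH : IsSaturatedOA H) (k : κ) :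
    IsBalancedTwoLevel (interactionDesign (deleteColumn H k)) :=
  isBalancedTwoLevel_interactionDesign (fun r j ↦ hH.eq_one_or_eq_neg_one r j)
    fun _ _ hij ↦ hH.sum_mul_eq_zero (Subtype.coe_ne_coe.2 hij)

theorem sq_interactionDesign_deleteColumn_dotProduct_add {H : ρ → κ → ℚ} (hH : IsSaturatedOA H)
    (k : κ) : Pairwise fun r s ↦
      (interactionDesign (deleteColumn H k) r ⬝ᵥ interactionDesign (deleteColumn H k) s
        + ((Fintype.card ρ : ℚ) / 2 - 2)) ^ 2 = 1 := by
  intro r s hrs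
  have sq_dotProduct := sq_dotProduct_eq_card_add_two_mul_interactionDesign
    (D := deleteColumn H k) (fun r j ↦ hH.eq_one_or_eq_neg_one r j) r s
  have dotProduct_eq : H r k * H s k + deleteColumn H k r ⬝ᵥ deleteColumn H k s = -1 := by
    rw [← hH.dotProduct_eq_neg_one hrs]
    exact (Fintype.sum_eq_add_sum_subtype_ne (fun j ↦ H r j * H s j) k).symm
  have card_eq : (Fintype.card {j // j ≠ k} : ℚ) + 2 = Fintype.card ρ := by
    exact_mod_cast hH.card_subtype_ne_add_two k
  have sq_entry : (H r k * H s k) ^ 2 = 1 :=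
    sq_eq_one_iff.2 <|
      mul_eq_one_or_eq_neg_one (hH.eq_one_or_eq_neg_one r k) (hH.eq_one_or_eq_neg_one s k)
  have dotProduct_add_eq :
      interactionDesign (deleteColumn H k) r ⬝ᵥ interactionDesign (deleteColumn H k) s
        + ((Fintype.card ρ : ℚ) / 2 - 2) = H r k * H s k := by
    rw [eq_sub_of_add_eq' dotProduct_eq] at sq_dotProduct
    linear_combination (-1 / 2) * sq_dotProduct - (1 / 2) * card_eq + (1 / 2) * sq_entry
  rw [dotProduct_add_eq, sq_entry]

theorem Es2_interactionDesign_deleteColumn {n : ℕ} (hn : 4 < n) {κ : Type} [Fintype κ]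
    [LinearOrder κ] {H : Fin n → κ → ℚ} (hH : IsSaturatedOA H) (k : κ) :
    Es2 (interactionDesign (deleteColumn H k))
      = (n : ℚ) ^ 2 * ((n : ℚ) - 5) / (((n : ℚ) - 1) * ((n : ℚ) - 3)) := by
  have card_cols : (Fintype.card {j // j ≠ k} : ℚ) = n - 2 := by
    rw [eq_sub_iff_add_eq]
    exact_mod_cast (hH.card_subtype_ne_add_two k).trans (Fintype.card_fin n)
  have hn' : (4 : ℚ) < n := by exact_mod_cast hn
  have sub_one_ne_zero : (n : ℚ) - 1 ≠ 0 := by linarith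
  have sub_two_ne_zero : (n : ℚ) - 2 ≠ 0 := by linarith
  have sub_three_ne_zero : (n : ℚ) - 3 ≠ 0 := by linarith
  have sub_four_ne_zero : (n : ℚ) - 4 ≠ 0 := by linarith
  rw [(hH.isBalancedTwoLevel_interactionDesign_deleteColumn k).Es2_eq_of_sq_dotProduct_add_eq
    (hH.sq_interactionDesign_deleteColumn_dotProduct_add k), card_subtype_lt_eq_choose_two,
    Nat.cast_choose_two, card_cols, Fintype.card_fin]
  have pred_card : ((n : ℚ) - 2) * (n - 2 - 1) / 2 - 1 = (n - 1) * (n - 4) / 2 := by ring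
  rw [pred_card, show (n : ℚ) - 2 - 1 = n - 3 by ring]
  field_simp
  ring

end IsSaturatedOA

/-- Let `H'` be a saturated `OA(n, n-1, 2, 2)` with one fixed column
deleted. The `n × ((n-2)(n-3)/2)` design `X` whose columns are exactly the two-column
interaction columns of `H'` satisfies `E(s²)(X) = n²(n-5)/((n-1)(n-3))` and is
`E(s²)`-optimal among all balanced `n × ((n-2)(n-3)/2)` two-level designs. -/
theorem Es2_optimal_interactions_only_delete_one (n : ℕ) (hn : 8 ≤ n) (h4 : 4 ∣ n)
    (H : Fin n → Fin (n - 1) → ℚ)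
    (hpm : ∀ i j, H i j = 1 ∨ H i j = -1)
    (hbal : ∀ j, ∑ i : Fin n, H i j = 0)
    (horth : ∀ j k : Fin (n - 1), j ≠ k → ∑ i : Fin n, H i j * H i k = 0)
    (cdel : Fin (n - 1))
    (X : Fin n → {p : {j : Fin (n - 1) // j ≠ cdel} × {j : Fin (n - 1) // j ≠ cdel} //
      p.1.1 < p.2.1} → ℚ)
    (hX : ∀ r p, X r p = H r p.1.1.1 * H r p.1.2.1) :
    Es2 X = (n : ℚ) ^ 2 * ((n : ℚ) - 5) / (((n : ℚ) - 1) * ((n : ℚ) - 3)) ∧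
      ∀ Y : Fin n → Fin ((n - 2) * (n - 3) / 2) → ℚ,
        (∀ i j, Y i j = 1 ∨ Y i j = -1) → (∀ j, ∑ i : Fin n, Y i j = 0) →
          Es2 X ≤ Es2 Y := by
  have hH : IsSaturatedOA H := ⟨⟨hpm, hbal⟩, horth, by simp; omega⟩
  obtain rfl : X = interactionDesign (deleteColumn H cdel) := by
    ext r p
    exact hX r p
  refine ⟨hH.Es2_interactionDesign_deleteColumn (by omega) cdel, fun Y hYpm hYbal ↦ ?_⟩
  refine (hH.isBalancedTwoLevel_interactionDesign_deleteColumn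
    cdel).Es2_le_of_abs_dotProduct_add_le_one ⟨hYpm, hYbal⟩ ?_ _ fun r s hrs ↦
      (sq_le_one_iff_abs_le_one _).1
        (hH.sq_interactionDesign_deleteColumn_dotProduct_add cdel hrs).le
  have card_cols : Fintype.card {j // j ≠ cdel} = n - 2 := by
    have := hH.card_subtype_ne_add_two cdel
    simp only [Fintype.card_fin] at this
    omega
  rw [card_subtype_lt_eq_choose_two, card_cols, Nat.choose_two_right, Fintype.card_fin, Nat.sub_sub]
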